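/- arXiv:2110.04059 — 2 statements merged into one kernel-verified Lean document; each statement's English description precedes it below -/
import Mathlib

section
/- Let ℓ ∈ ℕ and α = ℓ + 1/2, n ∈ ℕ, m = (m₁,…,mₙ) ∈ ℕⁿ, and t = (t₁,…,tₙ) ∈ ℝⁿ. Let C^{(α)}_i denote the classical Gegenbauer polynomial, and define ρ_{ij}(z) = ∫_{-1}^{z} C^{(α)}_i(u)·C^{(α)}_j(u)·(1-u²)^{ℓ} du. Let R_m(z) be the n×n matrix with entries [R_m(z)]_{kℓ'} = δ_{kℓ'} + t_{ℓ'}·ρ_{m_k m_{ℓ'}}(z), and set τ_m(z) = det R_m(z). For i ∈ ℕ, let μ = (m₁,…,mₙ,i), let R_{(m,i)}(z) be the (n+1)×(n+1) matrix with entries [R_{(m,i)}(z)]_{kℓ'} = δ_{kℓ'} + s_{ℓ'}·ρ_{μ_k μ_{ℓ'}}(z) where s_{ℓ'} = t_{ℓ'} for ℓ' ≤ n and s_{n+1} = 0, and define C_{m;i}(z) = Σ_{j=1}^{n+1} [adj R_{(m,i)}(z)]_{n+1,j}·C^{(α)}_{μ_j}(z), where adj denotes the adjugate matrix. Then for every i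 ∈ ℕ and every z ∈ ℝ, writing C = C_{m;i} and λ_i = -i·(2α + i): (1-z²)·(τ_m·C'' - 2·τ_m'·C' + τ_m''·C) - (2α+1)·z·τ_m·C' + (2α-1)·z·τ_m'·C = λ_i·τ_m·C. -/
/-- The classical Gegenbauer polynomial
`C^{(α)}_i(z) = ∑_{k=0}^{⌊i/2⌋} (-1)^k Γ(i-k+α)/(Γ(α)k!(i-2k)!) (2z)^{i-2k}`. -/
noncomputable def gegenC (α : ℝ) (i : ℕ) (z : ℝ) : ℝ :=
  ∑ k ∈ Finset.range (i / 2 + 1),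
    (-1 : ℝ) ^ k * Real.Gamma ((i : ℝ) - k + α)
      / (Real.Gamma α * (Nat.factorial k) * (Nat.factorial (i - 2 * k)))
      * (2 * z) ^ (i - 2 * k)

/-- `ρ_{ij}(z) = ∫_{-1}^z C^{(α)}_i C^{(α)}_j (1-u²)^ℓ du`, for `α = ℓ + 1/2`. -/
noncomputable def rhoGegen (ℓ : ℕ) (i j : ℕ) (z : ℝ) : ℝ :=
  ∫ u in (-1 : ℝ)..z,
    gegenC ((ℓ : ℝ) + 1/2) i u * gegenC ((ℓ : ℝ) + 1/2) j u * (1 - u ^ 2) ^ ℓ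

/-- The `n × n` matrix `R_m(z)` with entries `δ_{kl} + t_l ρ_{m_k m_l}(z)`
(indices `1, …, n` realized as `k.1+1` for `k : Fin n`). -/
noncomputable def rMat (ℓ n : ℕ) (m : ℕ → ℕ) (t : ℕ → ℝ) (z : ℝ) :
    Matrix (Fin n) (Fin n) ℝ :=
  Matrix.of fun k l =>
    (if k = l then (1 : ℝ) else 0) + t (l.1 + 1) * rhoGegen ℓ (m (k.1 + 1)) (m (l.1 + 1)) z

/-- The τ-function `τ_m(z) = det R_m(z)`. -/
noncomputable def tauMat (ℓ n : ℕ) (m : ℕ → ℕ) (t : ℕ → ℝ) (z : ℝ) : ℝ :=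
  (rMat ℓ n m t z).det

/-- The exceptional Gegenbauer polynomial of the second kind
`C_{m;i}(z) = ∑_{j=1}^{n+1} [adj R_{(m,i)}(z)]_{n+1,j} C^{(α)}_{μ_j}(z)`,
where `μ = (m₁,…,mₙ,i)` and `s = (t₁,…,tₙ,0)`. -/
noncomputable def xGegenC (ℓ n : ℕ) (m : ℕ → ℕ) (t : ℕ → ℝ) (i : ℕ) (z : ℝ) : ℝ :=
  ∑ j : Fin (n + 1),
    (rMat ℓ (n + 1) (fun a => if a ≤ n then m a else i)
        (fun a => if a ≤ n then t a else 0) z).adjugate (Fin.last n) j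
      * gegenC ((ℓ : ℝ) + 1/2) (if j.1 + 1 ≤ n then m (j.1 + 1) else i) z


theorem gegenC_eq_eval (α : ℝ) (i : ℕ) :
    ∃ p : Polynomial ℝ, gegenC α i = fun z => p.eval z := by
  refine ⟨∑ k ∈ Finset.range (i / 2 + 1), Polynomial.C ((-1 : ℝ) ^ k * Real.Gamma ((i : ℝ) - k + α)
      / (Real.Gamma α * (Nat.factorial k) * (Nat.factorial (i - 2 * k)))) *
        (2 * Polynomial.X) ^ (i - 2 * k), ?_⟩
  ext z
  simp [gegenC, Polynomial.eval_finsetSum]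

theorem gegenC_analyticAt (α : ℝ) (i : ℕ) (z : ℝ) : AnalyticAt ℝ (gegenC α i) z := by
  obtain ⟨p, hp⟩ := gegenC_eq_eval α i
  rw [hp]
  exact AnalyticOnNhd.eval_polynomial p z (Set.mem_univ z)

theorem hasDerivAt_gegenC (α : ℝ) (i : ℕ) (z : ℝ) :
    HasDerivAt (gegenC α i) (deriv (gegenC α i) z) z :=
  (gegenC_analyticAt α i z).differentiableAt.hasDerivAt

theorem hasDerivAt_deriv_gegenC (α : ℝ) (i : ℕ) (z : ℝ) :
    HasDerivAt (deriv (gegenC α i)) (deriv (deriv (gegenC α i)) z) z :=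
  (gegenC_analyticAt α i z).deriv.differentiableAt.hasDerivAt

theorem exists_derivative_eq (p : Polynomial ℝ) :
    ∃ q : Polynomial ℝ, Polynomial.derivative q = p := by
  induction p using Polynomial.induction_on' with
  | add p q hp hq =>
    obtain ⟨a, rfl⟩ := hp
    obtain ⟨b, rfl⟩ := hq
    exact ⟨a + b, by simp⟩
  | monomial n a =>
    refine ⟨Polynomial.monomial (n + 1) (a / (n + 1)), ?_⟩
    rw [Polynomial.derivative_monomial]
    have : (n : ℝ) + 1 ≠ 0 := by positivity
    congr 1
    push_cast
    field_simp

theorem continuous_gegenC (α : ℝ) (i : ℕ) : Continuous (gegenC α i) := by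
  obtain ⟨p, hp⟩ := gegenC_eq_eval α i
  rw [hp]
  exact p.continuous

theorem hasDerivAt_rhoGegen (ℓ i j : ℕ) (z : ℝ) :
    HasDerivAt (rhoGegen ℓ i j)
      (gegenC ((ℓ : ℝ) + 1/2) i z * gegenC ((ℓ : ℝ) + 1/2) j z * (1 - z ^ 2) ^ ℓ) z := by
  have hc : Continuous fun u : ℝ =>
      gegenC ((ℓ : ℝ) + 1/2) i u * gegenC ((ℓ : ℝ) + 1/2) j u * (1 - u ^ 2) ^ ℓ :=
    ((continuous_gegenC _ i).mul (continuous_gegenC _ j)).mul (by fun_prop)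
  exact intervalIntegral.integral_hasDerivAt_right (hc.intervalIntegrable _ _)
    (hc.stronglyMeasurableAtFilter _ _) hc.continuousAt

theorem rhoGegen_neg_one (ℓ i j : ℕ) : rhoGegen ℓ i j (-1) = 0 :=
  intervalIntegral.integral_same

theorem rhoGegen_comm (ℓ i j : ℕ) (z : ℝ) : rhoGegen ℓ i j z = rhoGegen ℓ j i z := by
  simp only [rhoGegen, mul_comm (gegenC _ i _)]

/-- Two functions on `ℝ` with the same derivative that agree at one point are equal. -/
theorem eq_of_hasDerivAt_eq {f g f' : ℝ → ℝ} (hf : ∀ z, HasDerivAt f (f' z) z)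
    (hg : ∀ z, HasDerivAt g (f' z) z) {a : ℝ} (ha : f a = g a) (z : ℝ) : f z = g z := by
  have h := is_const_of_deriv_eq_zero (f := f - g)
    (fun x => ((hf x).sub (hg x)).differentiableAt)
    (fun x => by rw [((hf x).sub (hg x)).deriv, sub_self]) z a
  simp only [Pi.sub_apply] at h
  linarith

theorem rhoGegen_analyticAt (ℓ i j : ℕ) (z : ℝ) : AnalyticAt ℝ (rhoGegen ℓ i j) z := by
  obtain ⟨p, hp⟩ := gegenC_eq_eval ((ℓ : ℝ) + 1/2) i
  obtain ⟨q, hq⟩ := gegenC_eq_eval ((ℓ : ℝ) + 1/2) j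
  obtain ⟨s, hs⟩ := exists_derivative_eq (p * q * (1 - Polynomial.X ^ 2) ^ ℓ)
  have h : rhoGegen ℓ i j = fun z => (s - Polynomial.C (s.eval (-1))).eval z := by
    ext z
    refine eq_of_hasDerivAt_eq (g := fun z => (s - Polynomial.C (s.eval (-1))).eval z) (a := -1)
      (hasDerivAt_rhoGegen ℓ i j) (fun x => ?_) ?_ z
    · refine (Polynomial.hasDerivAt (s - Polynomial.C (s.eval (-1))) x).congr_deriv ?_
      rw [hp, hq]
      simp [hs]
    · simp [rhoGegen_neg_one]
  rw [h]
  exact AnalyticOnNhd.eval_polynomial _ z (Set.mem_univ z)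

/-- The Gegenbauer differential equation. -/
theorem gegenC_ode {α : ℝ} (hα : 0 < α) (i : ℕ) (z : ℝ) :
    (1 - z ^ 2) * deriv (deriv (gegenC α i)) z
      = (2 * α + 1) * z * deriv (gegenC α i) z + (-(i : ℝ) * (2 * α + i)) * gegenC α i z := by
  set a : ℕ → ℝ := fun k => (-1 : ℝ) ^ k * Real.Gamma ((i : ℝ) - k + α)
      / (Real.Gamma α * (Nat.factorial k) * (Nat.factorial (i - 2 * k))) with ha
  have hd (n : ℕ) (x : ℝ) : HasDerivAt (fun z : ℝ => (2 * z) ^ n) (n * (2 * x) ^ (n - 1) * 2) x := by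
    simpa using ((hasDerivAt_id' x).const_mul 2).fun_pow n
  have h1 : deriv (gegenC α i) = fun z => ∑ k ∈ Finset.range (i / 2 + 1),
      a k * ((i - 2 * k : ℕ) * (2 * z) ^ (i - 2 * k - 1) * 2) := by
    ext x
    exact (HasDerivAt.fun_sum fun k _ => (hd (i - 2 * k) x).const_mul (a k)).deriv
  have h2 : deriv (deriv (gegenC α i)) z = ∑ k ∈ Finset.range (i / 2 + 1),
      a k * ((i - 2 * k : ℕ) * ((i - 2 * k - 1 : ℕ) * (2 * z) ^ (i - 2 * k - 1 - 1) * 2) * 2) := by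
    rw [h1]
    exact (HasDerivAt.fun_sum fun k _ =>
      ((((hd (i - 2 * k - 1) z).const_mul _).mul_const 2).const_mul (a k))).deriv
  have h0 : gegenC α i z = ∑ k ∈ Finset.range (i / 2 + 1), a k * (2 * z) ^ (i - 2 * k) := rfl
  let E : ℕ → ℝ := fun k => 4 * k * (i - k + α) * a k * (2 * z) ^ (i - 2 * k)
  let F : ℕ → ℝ := fun k =>
    4 * a k * (i - 2 * k : ℕ) * (i - 2 * k - 1 : ℕ) * (2 * z) ^ (i - 2 * k - 2)
  have key : ∑ k ∈ Finset.range (i / 2 + 1), (F k + E k) = 0 := by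
    have hF : ∀ k ∈ Finset.range (i / 2), F k + E k = E k - E (k + 1) := by
      intro k hk
      have hk : 2 * k + 2 ≤ i := by rw [Finset.mem_range] at hk; omega
      obtain ⟨j, rfl⟩ := Nat.exists_eq_add_of_le hk
      have e1 : 2 * k + 2 + j - 2 * k = j + 2 := by omega
      have e2 : 2 * k + 2 + j - 2 * (k + 1) = j := by omega
      have hG : Real.Gamma (((2 * k + 2 + j : ℕ) : ℝ) - k + α)
          = (k + 1 + j + α) * Real.Gamma (k + 1 + j + α) := by
        rw [← Real.Gamma_add_one (by positivity)]
        congr 1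
        push_cast
        ring
      have hG' : Real.Gamma (((2 * k + 2 + j : ℕ) : ℝ) - (k + 1 : ℕ) + α)
          = Real.Gamma (k + 1 + j + α) := by
        congr 1
        push_cast
        ring
      have := (Real.Gamma_pos_of_pos hα).ne'
      simp only [E, F, ha, e1, e2, hG, hG', Nat.factorial_succ]
      have h3 := Nat.factorial_ne_zero k
      have h4 := Nat.factorial_ne_zero j
      rw [show j + 2 - 1 = j + 1 by omega, show j + 2 - 2 = j by omega]
      push_cast
      field_simp
      ring
    have hlast : F (i / 2) = 0 := by
      rcases Nat.mod_two_eq_zero_or_one i with h | h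
      · have : i - 2 * (i / 2) = 0 := by omega
        simp [F, this]
      · have : i - 2 * (i / 2) - 1 = 0 := by omega
        simp [F, this]
    rw [Finset.sum_range_succ, Finset.sum_congr rfl hF, Finset.sum_range_sub', hlast]
    simp [E]
  have hsum : (1 - z ^ 2) * deriv (deriv (gegenC α i)) z
      - (2 * α + 1) * z * deriv (gegenC α i) z - (-(i : ℝ) * (2 * α + i)) * gegenC α i z
      = ∑ k ∈ Finset.range (i / 2 + 1), (F k + E k) := by
    rw [h2, h1, h0, Finset.mul_sum, Finset.mul_sum, Finset.mul_sum, ← Finset.sum_sub_distrib,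
      ← Finset.sum_sub_distrib]
    refine Finset.sum_congr rfl fun k hk => ?_
    have hk : 2 * k ≤ i := by rw [Finset.mem_range] at hk; omega
    obtain ⟨j, rfl⟩ := Nat.exists_eq_add_of_le hk
    have e1 : 2 * k + j - 2 * k = j := by omega
    simp only [E, F, e1]
    generalize a k = c
    rcases j with _ | _ | j
    · push_cast
      ring
    · simp
      ring
    · simp only [Nat.add_sub_cancel, show j + 1 + 1 - 2 = j by omega]
      push_cast
      ring
  rw [key] at hsum
  linarith

/-- The Wronskian of two Gegenbauer polynomials as a multiple of their incomplete inner product. -/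
theorem rhoGegen_wronskian (ℓ i j : ℕ) (z : ℝ) :
    (1 - z ^ 2) ^ (ℓ + 1) * (deriv (gegenC ((ℓ : ℝ) + 1/2) i) z * gegenC ((ℓ : ℝ) + 1/2) j z
        - gegenC ((ℓ : ℝ) + 1/2) i z * deriv (gegenC ((ℓ : ℝ) + 1/2) j) z)
      = (-(i : ℝ) * (2 * ((ℓ : ℝ) + 1/2) + i) - -(j : ℝ) * (2 * ((ℓ : ℝ) + 1/2) + j))
        * rhoGegen ℓ i j z := by
  refine eq_of_hasDerivAt_eq (a := -1)
    (f := fun z => (1 - z ^ 2) ^ (ℓ + 1) *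
      (deriv (gegenC ((ℓ : ℝ) + 1/2) i) z * gegenC ((ℓ : ℝ) + 1/2) j z
        - gegenC ((ℓ : ℝ) + 1/2) i z * deriv (gegenC ((ℓ : ℝ) + 1/2) j) z))
    (g := fun z =>
      (-(i : ℝ) * (2 * ((ℓ : ℝ) + 1/2) + i) - -(j : ℝ) * (2 * ((ℓ : ℝ) + 1/2) + j))
        * rhoGegen ℓ i j z) (fun x => ?_)
    (fun x => (hasDerivAt_rhoGegen ℓ i j x).const_mul _) (by simp [rhoGegen_neg_one]) z
  have hα : (0 : ℝ) < (ℓ : ℝ) + 1/2 := by positivity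
  have hp : HasDerivAt (fun x : ℝ => (1 - x ^ 2) ^ (ℓ + 1))
      (((ℓ + 1 : ℕ) : ℝ) * (1 - x ^ 2) ^ ℓ * (-(2 * x))) x := by
    simpa using (((hasDerivAt_id' x).fun_pow 2).const_sub 1).fun_pow (ℓ + 1)
  refine (hp.fun_mul (((hasDerivAt_deriv_gegenC _ i x).fun_mul (hasDerivAt_gegenC _ j x)).fun_sub
    ((hasDerivAt_gegenC _ i x).fun_mul (hasDerivAt_deriv_gegenC _ j x)))).congr_deriv ?_
  have hi := gegenC_ode hα i x
  have hj := gegenC_ode hα j x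
  push_cast
  linear_combination ((1 - x ^ 2) ^ ℓ * gegenC ((ℓ : ℝ) + 1/2) j x) * hi -
    ((1 - x ^ 2) ^ ℓ * gegenC ((ℓ : ℝ) + 1/2) i x) * hj

section MatrixCalculus

open Matrix

variable {ι : Type*} [Fintype ι]

/-- Leibniz rule for a matrix bilinear form. -/
theorem hasDerivAt_dotProduct_mulVec {M : ℝ → Matrix ι ι ℝ} {M' : Matrix ι ι ℝ}
    {x y : ℝ → ι → ℝ} {x' y' : ι → ℝ} {z : ℝ}
    (hM : ∀ k l, HasDerivAt (fun s => M s k l) (M' k l) z)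
    (hx : ∀ k, HasDerivAt (fun s => x s k) (x' k) z)
    (hy : ∀ k, HasDerivAt (fun s => y s k) (y' k) z) :
    HasDerivAt (fun s => x s ⬝ᵥ M s *ᵥ y s)
      (x' ⬝ᵥ M z *ᵥ y z + x z ⬝ᵥ M z *ᵥ y' + x z ⬝ᵥ M' *ᵥ y z) z := by
  simp only [dotProduct, mulVec]
  refine (HasDerivAt.fun_sum fun k _ => (hx k).fun_mul
    (HasDerivAt.fun_sum fun l _ => (hM k l).fun_mul (hy l))).congr_deriv ?_
  simp only [← Finset.sum_add_distrib]
  refine Finset.sum_congr rfl fun k _ => ?_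
  rw [add_assoc, ← mul_add, ← Finset.sum_add_distrib]
  congr 2
  exact Finset.sum_congr rfl fun l _ => by ring

variable [DecidableEq ι]

/-- Jacobi's formula for the derivative of a determinant. -/
theorem hasDerivAt_det {R : ℝ → Matrix ι ι ℝ} {R' : Matrix ι ι ℝ} {z : ℝ}
    (h : ∀ k l, HasDerivAt (fun x => R x k l) (R' k l) z) :
    HasDerivAt (fun x => (R x).det) ((R z).adjugate * R').trace z := by
  have hdet : HasDerivAt (fun x => (R x).det)
      (∑ σ : Equiv.Perm ι, ((Equiv.Perm.sign σ : ℤ) : ℝ) *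
        ∑ j, (∏ i ∈ Finset.univ.erase j, R z (σ i) i) * R' (σ j) j) z := by
    simp only [det_apply']
    refine HasDerivAt.fun_sum fun σ _ => HasDerivAt.const_mul _ ?_
    simpa only [smul_eq_mul] using
      HasDerivAt.fun_finsetProd (u := Finset.univ) fun i _ => h (σ i) i
  refine hdet.congr_deriv ?_
  simp only [Finset.mul_sum, trace, diag_apply]
  rw [Finset.sum_comm]
  refine Finset.sum_congr rfl fun j _ => ?_
  have hcol : ((R z).adjugate * R') j j = ((R z).updateCol j fun k => R' k j).det := by
    rw [← cramer_apply, cramer_eq_adjugate_mulVec]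
    rfl
  rw [hcol, det_apply']
  refine Finset.sum_congr rfl fun σ _ => ?_
  rw [← Finset.mul_prod_erase Finset.univ _ (Finset.mem_univ j)]
  rw [updateCol_self, mul_comm (R' _ _)]
  congr 2
  refine Finset.prod_congr rfl fun i hi => ?_
  rw [updateCol_ne (Finset.ne_of_mem_erase hi)]

theorem hasDerivAt_inv_apply {R : ℝ → Matrix ι ι ℝ} {R' : Matrix ι ι ℝ} {z : ℝ}
    (h : ∀ k l, HasDerivAt (fun x => R x k l) (R' k l) z) (hz : (R z).det ≠ 0) (k l : ι) :
    HasDerivAt (fun x => (R x)⁻¹ k l) (-((R z)⁻¹ * R' * (R z)⁻¹) k l) z := by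
  let := Matrix.linftyOpNormedRing (n := ι) (α := ℝ)
  let := Matrix.linftyOpNormedAlgebra (n := ι) (R := ℝ) (α := ℝ)
  have hR : HasDerivAt R R' z := hasDerivAt_pi.2 fun k => hasDerivAt_pi.2 fun l => h k l
  have hu : IsUnit (R z) := (isUnit_iff_isUnit_det _).2 (isUnit_iff_ne_zero.2 hz)
  obtain ⟨u, hu⟩ := hu
  have h1 := (hu ▸ hasFDerivAt_ringInverse (𝕜 := ℝ) u).comp_hasDerivAt z hR
  have h2 := hasDerivAt_pi.1 (hasDerivAt_pi.1 h1 k) l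
  have hinv : (R z)⁻¹ = ↑u⁻¹ := by rw [← hu, coe_units_inv]
  rw [hinv]
  simpa [Function.comp_def, ← nonsing_inv_eq_ringInverse] using h2

/-- The matrix `T (1 + G T)⁻¹` with `T = diag t`. -/
noncomputable def resolventMat (t : ι → ℝ) (G : Matrix ι ι ℝ) : Matrix ι ι ℝ :=
  diagonal t * (1 + G * diagonal t)⁻¹

theorem resolventMat_isSymm {t : ι → ℝ} {G : Matrix ι ι ℝ} (hG : G.IsSymm)
    (hdet : (1 + G * diagonal t).det ≠ 0) : (resolventMat t G).IsSymm := by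
  have hu : IsUnit (1 + G * diagonal t).det := isUnit_iff_ne_zero.2 hdet
  have hut : IsUnit (1 + G * diagonal t)ᵀ.det := by rwa [det_transpose]
  have ht : (1 + G * diagonal t)ᵀ = 1 + diagonal t * G := by
    rw [transpose_add, transpose_mul, diagonal_transpose, hG.eq, transpose_one]
  have hcomm : diagonal t * (1 + G * diagonal t) = (1 + G * diagonal t)ᵀ * diagonal t := by
    rw [ht]
    noncomm_ring
  rw [IsSymm, resolventMat, transpose_mul, diagonal_transpose, transpose_nonsing_inv]
  calc (1 + G * diagonal t)ᵀ⁻¹ * diagonal t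
      = (1 + G * diagonal t)ᵀ⁻¹ * (diagonal t * (1 + G * diagonal t))
          * (1 + G * diagonal t)⁻¹ := by
        rw [← mul_assoc, mul_nonsing_inv_cancel_right _ _ hu]
    _ = diagonal t * (1 + G * diagonal t)⁻¹ := by
        rw [hcomm, nonsing_inv_mul_cancel_left _ _ hut]

/-- Commutator of a diagonal matrix with the resolvent. -/
theorem resolventMat_commutator {t : ι → ℝ} {G : Matrix ι ι ℝ} (hG : G.IsSymm)
    (hdet : (1 + G * diagonal t).det ≠ 0) (d : ι → ℝ) :
    diagonal d * resolventMat t G - resolventMat t G * diagonal d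
      = -(resolventMat t G * (diagonal d * G - G * diagonal d) * resolventMat t G) := by
  have hsymm := resolventMat_isSymm hG hdet
  set S := (1 + G * diagonal t)⁻¹ with hS
  set M := resolventMat t G with hM
  have hMS : M = diagonal t * S := rfl
  have hMS' : M = Sᵀ * diagonal t := by
    rw [← hsymm.eq, hMS, transpose_mul, diagonal_transpose]
  have hGM : G * M = 1 - S := by
    have h := mul_nonsing_inv _ (isUnit_iff_ne_zero.2 hdet)
    rw [← hS, add_mul, one_mul, mul_assoc, ← hMS] at h
    exact eq_sub_of_add_eq' h
  have hMG : M * G = 1 - Sᵀ := by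
    have h := congrArg transpose hGM
    rwa [transpose_mul, hG.eq, hsymm.eq, transpose_sub, transpose_one] at h
  have hdd : diagonal t * diagonal d = diagonal d * diagonal t := by
    simp only [diagonal_mul_diagonal, mul_comm]
  have hx : M * diagonal d * S = Sᵀ * diagonal d * M := by
    rw [hMS', mul_assoc Sᵀ, hdd, mul_assoc, mul_assoc, ← hMS, ← hMS', mul_assoc]
  have : M * (diagonal d * G - G * diagonal d) * M
      = M * diagonal d * (G * M) - (M * G) * diagonal d * M := by noncomm_ring
  rw [this, hGM, hMG, mul_sub, sub_mul, sub_mul, hx]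
  noncomm_ring

theorem hasDerivAt_one_add_mul_diagonal_apply {t : ι → ℝ} {G : ℝ → Matrix ι ι ℝ} {c : ℝ}
    {v : ι → ℝ} {z : ℝ} (hG : ∀ k l, HasDerivAt (fun x => G x k l) (c * (v k * v l)) z)
    (k l : ι) : HasDerivAt (fun x => (1 + G x * diagonal t) k l)
      ((c • vecMulVec v (v ᵥ* diagonal t)) k l) z := by
  simp only [Matrix.add_apply, mul_diagonal, Matrix.smul_apply, vecMulVec_apply, vecMul_diagonal,
    smul_eq_mul]
  exact (((hG k l).mul_const (t l)).const_add _).congr_deriv (by ring)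

theorem hasDerivAt_resolventMat_apply {t : ι → ℝ} {G : ℝ → Matrix ι ι ℝ} {c : ℝ} {v : ι → ℝ}
    {z : ℝ} (hG : ∀ k l, HasDerivAt (fun x => G x k l) (c * (v k * v l)) z)
    (hdet : (1 + G z * diagonal t).det ≠ 0) (k l : ι) :
    HasDerivAt (fun x => resolventMat t (G x) k l)
      (-(c • vecMulVec (resolventMat t (G z) *ᵥ v) (v ᵥ* resolventMat t (G z))) k l) z := by
  have hR := hasDerivAt_one_add_mul_diagonal_apply (t := t) hG
  simp only [resolventMat, diagonal_mul]
  refine ((hasDerivAt_inv_apply hR hdet k l).const_mul (t k)).congr_deriv ?_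
  rw [mul_neg, ← diagonal_mul]
  congr 2
  rw [Matrix.mul_smul, Matrix.smul_mul, Matrix.mul_smul, mul_vecMulVec, vecMulVec_mul,
    mul_vecMulVec, mulVec_mulVec, vecMul_vecMul]

theorem hasDerivAt_dotProduct_resolventMat {t : ι → ℝ} {G : ℝ → Matrix ι ι ℝ} {c : ℝ} {v : ι → ℝ}
    {z : ℝ} (hG : ∀ k l, HasDerivAt (fun x => G x k l) (c * (v k * v l)) z)
    (hdet : (1 + G z * diagonal t).det ≠ 0)
    {x y : ℝ → ι → ℝ} {x' y' : ι → ℝ} (hx : ∀ k, HasDerivAt (fun s => x s k) (x' k) z)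
    (hy : ∀ k, HasDerivAt (fun s => y s k) (y' k) z) :
    HasDerivAt (fun s => x s ⬝ᵥ resolventMat t (G s) *ᵥ y s)
      (x' ⬝ᵥ resolventMat t (G z) *ᵥ y z + x z ⬝ᵥ resolventMat t (G z) *ᵥ y'
        - c * (x z ⬝ᵥ resolventMat t (G z) *ᵥ v) * (v ⬝ᵥ resolventMat t (G z) *ᵥ y z)) z := by
  refine (hasDerivAt_dotProduct_mulVec
    (M' := -(c • vecMulVec (resolventMat t (G z) *ᵥ v) (v ᵥ* resolventMat t (G z))))
    (fun k l => hasDerivAt_resolventMat_apply hG hdet k l) hx hy).congr_deriv ?_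
  rw [sub_eq_add_neg, neg_mulVec, dotProduct_neg, smul_mulVec, dotProduct_smul, vecMulVec_mulVec,
    ← dotProduct_mulVec]
  congr 2
  simp only [op_smul_eq_smul, dotProduct_smul, smul_eq_mul]
  ring

theorem hasDerivAt_det_one_add_mul_diagonal {t : ι → ℝ} {G : ℝ → Matrix ι ι ℝ} {c : ℝ}
    {v : ι → ℝ} {z : ℝ} (hG : ∀ k l, HasDerivAt (fun x => G x k l) (c * (v k * v l)) z)
    (hdet : (1 + G z * diagonal t).det ≠ 0) :
    HasDerivAt (fun x => (1 + G x * diagonal t).det)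
      ((1 + G z * diagonal t).det * (c * (v ⬝ᵥ resolventMat t (G z) *ᵥ v))) z := by
  have hR := hasDerivAt_one_add_mul_diagonal_apply (t := t) hG
  refine (hasDerivAt_det hR).congr_deriv ?_
  have hadj : (1 + G z * diagonal t).adjugate
      = (1 + G z * diagonal t).det • (1 + G z * diagonal t)⁻¹ := by
    rw [inv_def, smul_smul, Ring.mul_inverse_cancel _ (isUnit_iff_ne_zero.2 hdet), one_smul]
  rw [hadj, Matrix.smul_mul, Matrix.mul_smul, mul_vecMulVec, trace_smul, trace_smul,
    trace_vecMulVec, dotProduct_comm, ← dotProduct_mulVec, mulVec_mulVec]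
  rfl

end MatrixCalculus

section Dressing

open Matrix

variable {ι : Type*}

/-- The matrix of incomplete inner products `ρ_{μ_k μ_l}(z)`. -/
noncomputable def gramGegen (ℓ : ℕ) (μ : ι → ℕ) (z : ℝ) : Matrix ι ι ℝ :=
  Matrix.of fun k l => rhoGegen ℓ (μ k) (μ l) z

theorem gramGegen_isSymm (ℓ : ℕ) (μ : ι → ℕ) (z : ℝ) : (gramGegen ℓ μ z).IsSymm :=
  Matrix.ext fun k l => rhoGegen_comm ℓ (μ l) (μ k) z

/-- The vector of Gegenbauer polynomials of degrees `μ_k`. -/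
noncomputable def gegenVec (ℓ : ℕ) (μ : ι → ℕ) (z : ℝ) (k : ι) : ℝ :=
  gegenC ((ℓ : ℝ) + 1/2) (μ k) z

/-- The derivative of `gegenVec`. -/
noncomputable def gegenVecDeriv (ℓ : ℕ) (μ : ι → ℕ) (z : ℝ) (k : ι) : ℝ :=
  deriv (gegenC ((ℓ : ℝ) + 1/2) (μ k)) z

/-- The vector of incomplete inner products `ρ_{i μ_k}(z)`. -/
noncomputable def rhoVec (ℓ i : ℕ) (μ : ι → ℕ) (z : ℝ) (k : ι) : ℝ :=
  rhoGegen ℓ i (μ k) z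

/-- The eigenvalue `-i(2α+i)` of the Gegenbauer operator, `α = ℓ + 1/2`. -/
noncomputable def gegenEig (ℓ i : ℕ) : ℝ := -(i : ℝ) * (2 * ((ℓ : ℝ) + 1/2) + i)

theorem hasDerivAt_gramGegen (ℓ : ℕ) (μ : ι → ℕ) (z : ℝ) (k l : ι) :
    HasDerivAt (fun x => gramGegen ℓ μ x k l)
    ((1 - z ^ 2) ^ ℓ * (gegenVec ℓ μ z k * gegenVec ℓ μ z l)) z :=
  (hasDerivAt_rhoGegen ℓ (μ k) (μ l) z).congr_deriv (mul_comm _ _)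

theorem hasDerivAt_rhoVec (ℓ i : ℕ) (μ : ι → ℕ) (z : ℝ) (k : ι) :
    HasDerivAt (fun x => rhoVec ℓ i μ x k)
    ((((1 - z ^ 2) ^ ℓ * gegenC ((ℓ : ℝ) + 1/2) i z) • gegenVec ℓ μ z) k) z :=
  (hasDerivAt_rhoGegen ℓ i (μ k) z).congr_deriv (by
    simp only [Pi.smul_apply, smul_eq_mul, gegenVec]
    ring)

theorem hasDerivAt_gegenVec (ℓ : ℕ) (μ : ι → ℕ) (z : ℝ) (k : ι) :
    HasDerivAt (fun x => gegenVec ℓ μ x k) (gegenVecDeriv ℓ μ z k) z :=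
  hasDerivAt_gegenC _ (μ k) z

variable [Fintype ι] [DecidableEq ι]

/-- The resolvent `T (1 + G T)⁻¹` of the Gram matrix. -/
noncomputable def gegenRes (ℓ : ℕ) (μ : ι → ℕ) (t : ι → ℝ) (z : ℝ) : Matrix ι ι ℝ :=
  resolventMat t (gramGegen ℓ μ z)

/-- The determinant of `1 + G T`. -/
noncomputable def gegenTau (ℓ : ℕ) (μ : ι → ℕ) (t : ι → ℝ) (z : ℝ) : ℝ :=
  (1 + gramGegen ℓ μ z * diagonal t).det

/-- The quadratic form of the resolvent on `gegenVec`. -/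
noncomputable def gegenQuad (ℓ : ℕ) (μ : ι → ℕ) (t : ι → ℝ) (z : ℝ) : ℝ :=
  gegenVec ℓ μ z ⬝ᵥ gegenRes ℓ μ t z *ᵥ gegenVec ℓ μ z

/-- The bilinear form of the resolvent on `gegenVec` and its derivative. -/
noncomputable def gegenQuadDeriv (ℓ : ℕ) (μ : ι → ℕ) (t : ι → ℝ) (z : ℝ) : ℝ :=
  gegenVec ℓ μ z ⬝ᵥ gegenRes ℓ μ t z *ᵥ gegenVecDeriv ℓ μ z

/-- The dressed Gegenbauer polynomial `C_i - r M v`. -/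
noncomputable def dressed (ℓ : ℕ) (μ : ι → ℕ) (t : ι → ℝ) (i : ℕ) (z : ℝ) : ℝ :=
  gegenC ((ℓ : ℝ) + 1/2) i z - rhoVec ℓ i μ z ⬝ᵥ gegenRes ℓ μ t z *ᵥ gegenVec ℓ μ z

/-- The dressing `C_i' - r M v'` of the derivative of a Gegenbauer polynomial. -/
noncomputable def dressedDeriv (ℓ : ℕ) (μ : ι → ℕ) (t : ι → ℝ) (i : ℕ) (z : ℝ) : ℝ :=
  deriv (gegenC ((ℓ : ℝ) + 1/2) i) z
    - rhoVec ℓ i μ z ⬝ᵥ gegenRes ℓ μ t z *ᵥ gegenVecDeriv ℓ μ z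

variable {ℓ : ℕ} {μ : ι → ℕ} {t : ι → ℝ} {z : ℝ}

theorem gegenRes_swap (hz : gegenTau ℓ μ t z ≠ 0) (x y : ι → ℝ) :
    x ⬝ᵥ gegenRes ℓ μ t z *ᵥ y = y ⬝ᵥ gegenRes ℓ μ t z *ᵥ x := by
  rw [dotProduct_mulVec, dotProduct_comm, ← mulVec_transpose,
    show (gegenRes ℓ μ t z)ᵀ = gegenRes ℓ μ t z from
      resolventMat_isSymm (gramGegen_isSymm ℓ μ z) hz]

theorem hasDerivAt_gegenTau (hz : gegenTau ℓ μ t z ≠ 0) :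
    HasDerivAt (gegenTau ℓ μ t)
      (gegenTau ℓ μ t z * ((1 - z ^ 2) ^ ℓ * gegenQuad ℓ μ t z)) z :=
  hasDerivAt_det_one_add_mul_diagonal (hasDerivAt_gramGegen ℓ μ z) hz

theorem hasDerivAt_gegenQuad (hz : gegenTau ℓ μ t z ≠ 0) :
    HasDerivAt (gegenQuad ℓ μ t)
      (2 * gegenQuadDeriv ℓ μ t z - (1 - z ^ 2) ^ ℓ * gegenQuad ℓ μ t z ^ 2) z := by
  refine (hasDerivAt_dotProduct_resolventMat (x' := gegenVecDeriv ℓ μ z)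
    (y' := gegenVecDeriv ℓ μ z) (hasDerivAt_gramGegen ℓ μ z) hz
    (hasDerivAt_gegenVec ℓ μ z) (hasDerivAt_gegenVec ℓ μ z)).congr_deriv ?_
  have := gegenRes_swap hz (gegenVecDeriv ℓ μ z) (gegenVec ℓ μ z)
  simp only [gegenRes] at this
  simp only [gegenQuadDeriv, gegenQuad, gegenRes, this]
  ring

theorem hasDerivAt_dressed (i : ℕ) (hz : gegenTau ℓ μ t z ≠ 0) :
    HasDerivAt (dressed ℓ μ t i)
      (dressedDeriv ℓ μ t i z - (1 - z ^ 2) ^ ℓ * gegenQuad ℓ μ t z * dressed ℓ μ t i z) z := by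
  refine ((hasDerivAt_gegenC _ i z).fun_sub (hasDerivAt_dotProduct_resolventMat
    (y' := gegenVecDeriv ℓ μ z) (hasDerivAt_gramGegen ℓ μ z) hz (hasDerivAt_rhoVec ℓ i μ z)
    (hasDerivAt_gegenVec ℓ μ z))).congr_deriv ?_
  simp only [dressed, dressedDeriv, gegenQuad, gegenRes, smul_dotProduct, smul_eq_mul]
  ring

/-- Moving the eigenvalues through the resolvent. -/
theorem rhoVec_gegenRes_eig (i : ℕ) (hz : gegenTau ℓ μ t z ≠ 0) :
    gegenEig ℓ i * (rhoVec ℓ i μ z ⬝ᵥ gegenRes ℓ μ t z *ᵥ gegenVec ℓ μ z)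
        - rhoVec ℓ i μ z ⬝ᵥ gegenRes ℓ μ t z *ᵥ
          (diagonal (fun k => gegenEig ℓ (μ k)) *ᵥ gegenVec ℓ μ z)
      = (1 - z ^ 2) ^ (ℓ + 1) * (gegenQuad ℓ μ t z * dressedDeriv ℓ μ t i z
        - gegenQuadDeriv ℓ μ t z * dressed ℓ μ t i z) := by
  set d : ι → ℝ := fun k => gegenEig ℓ (μ k) with hd
  set p := (1 - z ^ 2) ^ (ℓ + 1) with hp
  have hr : gegenEig ℓ i • rhoVec ℓ i μ z - rhoVec ℓ i μ z ᵥ* diagonal d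
      = p • (deriv (gegenC ((ℓ : ℝ) + 1/2) i) z • gegenVec ℓ μ z
        - gegenC ((ℓ : ℝ) + 1/2) i z • gegenVecDeriv ℓ μ z) := by
    ext k
    have := rhoGegen_wronskian ℓ i (μ k) z
    simp only [Pi.sub_apply, Pi.smul_apply, smul_eq_mul, vecMul_diagonal, rhoVec, gegenVec,
      gegenVecDeriv, hd, gegenEig]
    linear_combination -this
  have hG : diagonal d * gramGegen ℓ μ z - gramGegen ℓ μ z * diagonal d
      = p • (vecMulVec (gegenVecDeriv ℓ μ z) (gegenVec ℓ μ z)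
        - vecMulVec (gegenVec ℓ μ z) (gegenVecDeriv ℓ μ z)) := by
    ext k l
    have := rhoGegen_wronskian ℓ (μ k) (μ l) z
    simp only [Matrix.sub_apply, Matrix.smul_apply, smul_eq_mul, diagonal_mul, mul_diagonal,
      vecMulVec_apply, gegenVec, gegenVecDeriv, hd, gegenEig, gramGegen, of_apply]
    linear_combination -this
  have hcomm := resolventMat_commutator (gramGegen_isSymm ℓ μ z) hz d
  rw [hG] at hcomm
  change diagonal d * gegenRes ℓ μ t z - gegenRes ℓ μ t z * diagonal d =
    -(gegenRes ℓ μ t z * _ * gegenRes ℓ μ t z) at hcomm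
  have h1 := congrArg (fun x => x ⬝ᵥ gegenRes ℓ μ t z *ᵥ gegenVec ℓ μ z) hr
  have h2 := congrArg (fun A => rhoVec ℓ i μ z ⬝ᵥ A *ᵥ gegenVec ℓ μ z) hcomm
  have hswap := gegenRes_swap hz (gegenVecDeriv ℓ μ z) (gegenVec ℓ μ z)
  simp only [sub_dotProduct, smul_dotProduct, smul_eq_mul, ← dotProduct_mulVec] at h1
  simp only [Matrix.mul_smul, Matrix.smul_mul, Matrix.mul_sub, Matrix.sub_mul, mul_vecMulVec,
    vecMulVec_mul, sub_mulVec, neg_mulVec, smul_mulVec, dotProduct_sub, dotProduct_neg,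
    dotProduct_smul, vecMulVec_mulVec, ← mulVec_mulVec, ← dotProduct_mulVec, op_smul_eq_smul,
    smul_eq_mul] at h2
  simp only [dressed, dressedDeriv, gegenQuad, gegenQuadDeriv] at *
  rw [hswap] at *
  linear_combination h1 + h2

theorem hasDerivAt_dressedDeriv (i : ℕ) (hz : gegenTau ℓ μ t z ≠ 0) :
    ∃ e, HasDerivAt (dressedDeriv ℓ μ t i) e z ∧
      (1 - z ^ 2) * e = (2 * ((ℓ : ℝ) + 1/2) + 1) * z * dressedDeriv ℓ μ t i z
        + gegenEig ℓ i * dressed ℓ μ t i z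
        + (1 - z ^ 2) ^ (ℓ + 1) * (gegenQuad ℓ μ t z * dressedDeriv ℓ μ t i z
          - 2 * gegenQuadDeriv ℓ μ t z * dressed ℓ μ t i z) := by
  have hα : (0 : ℝ) < (ℓ : ℝ) + 1/2 := by positivity
  refine ⟨_, (hasDerivAt_deriv_gegenC _ i z).fun_sub (hasDerivAt_dotProduct_resolventMat
    (y' := fun k => deriv (deriv (gegenC ((ℓ : ℝ) + 1/2) (μ k))) z) (hasDerivAt_gramGegen ℓ μ z) hz
    (hasDerivAt_rhoVec ℓ i μ z) (fun k => hasDerivAt_deriv_gegenC _ (μ k) z)), ?_⟩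
  have hv : (1 - z ^ 2) • (fun k => deriv (deriv (gegenC ((ℓ : ℝ) + 1/2) (μ k))) z)
      = ((2 * ((ℓ : ℝ) + 1/2) + 1) * z) • gegenVecDeriv ℓ μ z
        + diagonal (fun k => gegenEig ℓ (μ k)) *ᵥ gegenVec ℓ μ z := by
    ext k
    simp only [Pi.add_apply, Pi.smul_apply, smul_eq_mul, mulVec_diagonal]
    exact gegenC_ode hα (μ k) z
  have h1 := congrArg (fun y => rhoVec ℓ i μ z ⬝ᵥ gegenRes ℓ μ t z *ᵥ y) hv
  simp only [mulVec_add, mulVec_smul, dotProduct_add, dotProduct_smul, smul_eq_mul] at h1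
  have h2 := rhoVec_gegenRes_eig i hz
  have h3 := gegenC_ode hα i z
  simp only [dressed, dressedDeriv, gegenQuad, gegenQuadDeriv, smul_dotProduct, smul_eq_mul]
    at *
  change (1 - z ^ 2) * (_ - (_ * (gegenVec ℓ μ z ⬝ᵥ gegenRes ℓ μ t z *ᵥ gegenVecDeriv ℓ μ z)
    + rhoVec ℓ i μ z ⬝ᵥ gegenRes ℓ μ t z *ᵥ _ - _ *
      (rhoVec ℓ i μ z ⬝ᵥ gegenRes ℓ μ t z *ᵥ gegenVec ℓ μ z) *
      (gegenVec ℓ μ z ⬝ᵥ gegenRes ℓ μ t z *ᵥ gegenVecDeriv ℓ μ z))) = _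
  rw [show gegenEig ℓ i = -(i : ℝ) * (2 * ((ℓ : ℝ) + 1/2) + i) from rfl] at *
  linear_combination h3 - h1 + h2

end Dressing

section Analyticity

open Matrix

variable {ι : Type*} [Fintype ι] [DecidableEq ι]

theorem analyticAt_det {R : ℝ → Matrix ι ι ℝ} {z : ℝ}
    (h : ∀ k l, AnalyticAt ℝ (fun x => R x k l) z) : AnalyticAt ℝ (fun x => (R x).det) z := by
  simp only [det_apply']
  exact Finset.analyticAt_fun_sum _ fun σ _ =>
    analyticAt_const.mul (Finset.analyticAt_fun_prod _ fun i _ => h _ _)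

theorem analyticAt_adjugate_apply {R : ℝ → Matrix ι ι ℝ} {z : ℝ}
    (h : ∀ k l, AnalyticAt ℝ (fun x => R x k l) z) (i j : ι) :
    AnalyticAt ℝ (fun x => (R x).adjugate i j) z := by
  simp only [adjugate_apply]
  refine analyticAt_det fun k l => ?_
  by_cases hk : k = j
  · subst hk
    simpa only [updateRow_self] using analyticAt_const
  · simpa only [updateRow_ne hk] using h k l

theorem rMat_apply_analyticAt (ℓ n : ℕ) (m : ℕ → ℕ) (t : ℕ → ℝ) (z : ℝ) (k l : Fin n) :
    AnalyticAt ℝ (fun x => rMat ℓ n m t x k l) z :=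
  analyticAt_const.add (analyticAt_const.mul (rhoGegen_analyticAt ℓ _ _ z))

theorem tauMat_analyticAt (ℓ n : ℕ) (m : ℕ → ℕ) (t : ℕ → ℝ) (z : ℝ) :
    AnalyticAt ℝ (tauMat ℓ n m t) z :=
  analyticAt_det (rMat_apply_analyticAt ℓ n m t z)

theorem xGegenC_analyticAt (ℓ n : ℕ) (m : ℕ → ℕ) (t : ℕ → ℝ) (i : ℕ) (z : ℝ) :
    AnalyticAt ℝ (xGegenC ℓ n m t i) z :=
  Finset.analyticAt_fun_sum _ fun j _ =>
    (analyticAt_adjugate_apply (rMat_apply_analyticAt ℓ (n + 1) _ _ z) (Fin.last n) j).mul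
      (gegenC_analyticAt _ _ z)

end Analyticity

section Main

open Matrix

theorem rMat_eq (ℓ n : ℕ) (m : ℕ → ℕ) (t : ℕ → ℝ) (z : ℝ) :
    rMat ℓ n m t z = 1 + gramGegen ℓ (fun k : Fin n => m (k.1 + 1)) z *
      diagonal (fun k : Fin n => t (k.1 + 1)) := by
  ext k l
  simp only [rMat, of_apply, Matrix.add_apply, mul_diagonal, one_apply, gramGegen]
  ring

theorem tauMat_eq (ℓ n : ℕ) (m : ℕ → ℕ) (t : ℕ → ℝ) :
    tauMat ℓ n m t = gegenTau ℓ (fun k : Fin n => m (k.1 + 1)) (fun k => t (k.1 + 1)) := by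
  ext z
  rw [tauMat, rMat_eq, gegenTau]

theorem tauMat_neg_one (ℓ n : ℕ) (m : ℕ → ℕ) (t : ℕ → ℝ) : tauMat ℓ n m t (-1) = 1 := by
  have : rMat ℓ n m t (-1) = 1 := by
    ext k l
    simp [rMat, rhoGegen_neg_one, one_apply]
  rw [tauMat, this, det_one]

theorem xGegenC_eq_tau_mul_dressed (ℓ n : ℕ) (m : ℕ → ℕ) (t : ℕ → ℝ) (i : ℕ) {z : ℝ}
    (hz : tauMat ℓ n m t z ≠ 0) :
    xGegenC ℓ n m t i z = tauMat ℓ n m t z *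
      dressed ℓ (fun k : Fin n => m (k.1 + 1)) (fun k => t (k.1 + 1)) i z := by
  set μ : Fin n → ℕ := fun k => m (k.1 + 1) with hμ
  set s : Fin n → ℝ := fun k => t (k.1 + 1) with hs
  set A := rMat ℓ (n + 1) (fun a => if a ≤ n then m a else i)
    (fun a => if a ≤ n then t a else 0) z with hA
  have hcc (k l : Fin n) : A k.castSucc l.castSucc = rMat ℓ n m t z k l := by
    simp [hA, rMat]
  have hlc (l : Fin n) : A (Fin.last n) l.castSucc = s l * rhoVec ℓ i μ z l := by
    simp [hA, rMat, (Fin.castSucc_lt_last l).ne', rhoVec, hμ, hs]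
  have hcl (k : Fin n) : A k.castSucc (Fin.last n) = 0 := by
    simp [hA, rMat, (Fin.castSucc_lt_last k).ne]
  have hll : A (Fin.last n) (Fin.last n) = 1 := by
    simp [hA, rMat]
  have hdet : A.det = tauMat ℓ n m t z := by
    rw [det_succ_column A (Fin.last n), Fin.sum_univ_castSucc]
    simp only [hcl, hll, mul_zero, zero_mul, Finset.sum_const_zero, zero_add, Fin.val_last,
      ← two_mul, pow_mul, mul_one, neg_one_sq, one_pow, one_mul, tauMat]
    congr 1
    ext k l
    simpa using hcc k l
  let u : Fin n → ℝ := (rMat ℓ n m t z)⁻¹ *ᵥ gegenVec ℓ μ z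
  let x : Fin (n + 1) → ℝ := Fin.snoc u (dressed ℓ μ s i z)
  have hu : rMat ℓ n m t z *ᵥ u = gegenVec ℓ μ z := by
    rw [mulVec_mulVec, mul_nonsing_inv _ (isUnit_iff_ne_zero.2 hz), one_mulVec]
  have hsu : rhoVec ℓ i μ z ⬝ᵥ gegenRes ℓ μ s z *ᵥ gegenVec ℓ μ z
      = ∑ l, s l * rhoVec ℓ i μ z l * u l := by
    rw [gegenRes, resolventMat, ← rMat_eq, ← mulVec_mulVec]
    simp only [dotProduct, mulVec_diagonal]
    exact Finset.sum_congr rfl fun l _ => by simp only [u]; ring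
  have hx : A *ᵥ x = fun j : Fin (n + 1) =>
      gegenC ((ℓ : ℝ) + 1/2) (if j.1 + 1 ≤ n then m (j.1 + 1) else i) z := by
    ext j
    rw [mulVec, dotProduct, Fin.sum_univ_castSucc]
    refine Fin.lastCases ?_ (fun k => ?_) j
    · simp only [x, Fin.snoc_castSucc, Fin.snoc_last, hlc, hll, dressed, hsu]
      simp
    · simp only [x, Fin.snoc_castSucc, hcc, hcl, zero_mul, add_zero]
      have := congrFun hu k
      rw [mulVec, dotProduct] at this
      rw [this]
      simp [gegenVec, hμ]
  have hadj : xGegenC ℓ n m t i z = (A.adjugate *ᵥ (A *ᵥ x)) (Fin.last n) := by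
    rw [hx]
    rfl
  rw [hadj, mulVec_mulVec, adjugate_mul, smul_mulVec, one_mulVec, hdet]
  simp [x]

/-- The cleared eigenvalue equation away from the zeros of `τ`. -/
theorem xGegenC_ode_of_tauMat_ne_zero (ℓ n : ℕ) (m : ℕ → ℕ) (t : ℕ → ℝ) (i : ℕ) {z : ℝ}
    (hz : tauMat ℓ n m t z ≠ 0) :
    (1 - z ^ 2) *
          (tauMat ℓ n m t z * deriv (deriv (xGegenC ℓ n m t i)) z
            - 2 * deriv (tauMat ℓ n m t) z * deriv (xGegenC ℓ n m t i) z
            + deriv (deriv (tauMat ℓ n m t)) z * xGegenC ℓ n m t i z)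
        - (2 * ((ℓ : ℝ) + 1/2) + 1) * z * tauMat ℓ n m t z * deriv (xGegenC ℓ n m t i) z
        + (2 * ((ℓ : ℝ) + 1/2) - 1) * z * deriv (tauMat ℓ n m t) z * xGegenC ℓ n m t i z
      = (-(i : ℝ) * (2 * ((ℓ : ℝ) + 1/2) + i)) * tauMat ℓ n m t z * xGegenC ℓ n m t i z := by
  have hC {x : ℝ} (hx : tauMat ℓ n m t x ≠ 0) := xGegenC_eq_tau_mul_dressed ℓ n m t i hx
  have hU : ∀ᶠ x in nhds z, tauMat ℓ n m t x ≠ 0 :=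
    (tauMat_analyticAt ℓ n m t z).continuousAt.eventually_ne hz
  rw [tauMat_eq] at *
  set μ : Fin n → ℕ := fun k => m (k.1 + 1)
  set s : Fin n → ℝ := fun k => t (k.1 + 1)
  have hC1 {x : ℝ} (hx : ∀ᶠ y in nhds x, gegenTau ℓ μ s y ≠ 0) :
      deriv (xGegenC ℓ n m t i) x = gegenTau ℓ μ s x * dressedDeriv ℓ μ s i x := by
    have h : xGegenC ℓ n m t i =ᶠ[nhds x] fun y => gegenTau ℓ μ s y * dressed ℓ μ s i y :=
      hx.mono fun y hy => hC hy
    rw [h.deriv_eq, ((hasDerivAt_gegenTau hx.self_of_nhds).fun_mul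
      (hasDerivAt_dressed i hx.self_of_nhds)).deriv]
    ring
  obtain ⟨e, he, hode⟩ := hasDerivAt_dressedDeriv i hz
  have hC2 : deriv (deriv (xGegenC ℓ n m t i)) z =
      gegenTau ℓ μ s z * ((1 - z ^ 2) ^ ℓ * gegenQuad ℓ μ s z) * dressedDeriv ℓ μ s i z
        + gegenTau ℓ μ s z * e := by
    have h : deriv (xGegenC ℓ n m t i) =ᶠ[nhds z]
        fun y => gegenTau ℓ μ s y * dressedDeriv ℓ μ s i y :=
      hU.eventually_nhds.mono fun y hy => hC1 hy
    rw [h.deriv_eq, ((hasDerivAt_gegenTau hz).fun_mul he).deriv]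
  have hw : HasDerivAt (fun x : ℝ => (1 - x ^ 2) ^ ℓ)
      ((ℓ : ℝ) * (1 - z ^ 2) ^ (ℓ - 1) * (-(2 * z))) z := by
    simpa using (((hasDerivAt_id' z).fun_pow 2).const_sub 1).fun_pow ℓ
  have hw' : (1 - z ^ 2) * ((ℓ : ℝ) * (1 - z ^ 2) ^ (ℓ - 1) * (-(2 * z)))
      = -(2 * ℓ * z * (1 - z ^ 2) ^ ℓ) := by
    cases ℓ with
    | zero => simp
    | succ k =>
      rw [Nat.add_sub_cancel]
      ring
  have hT1 : deriv (gegenTau ℓ μ s) =ᶠ[nhds z]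
      fun y => gegenTau ℓ μ s y * ((1 - y ^ 2) ^ ℓ * gegenQuad ℓ μ s y) :=
    hU.mono fun y hy => (hasDerivAt_gegenTau hy).deriv
  rw [hT1.deriv_eq,
    ((hasDerivAt_gegenTau hz).fun_mul (hw.fun_mul (hasDerivAt_gegenQuad hz))).deriv, hC2, hC1 hU, hC hz, (hasDerivAt_gegenTau hz).deriv]
  simp only [gegenEig] at hode
  linear_combination gegenTau ℓ μ s z ^ 2 * hode +
    gegenTau ℓ μ s z ^ 2 * gegenQuad ℓ μ s z * dressed ℓ μ s i z * hw'

end Main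

/-- the exceptional Gegenbauer polynomials of the second kind
satisfy the (cleared) eigenvalue equation `T^{(α)}_{τ_m} C_{m;i} = λ_i C_{m;i}`
with `λ_i = -i(2α+i)`, `α = ℓ + 1/2`. -/
theorem statement17 (ℓ : ℕ) (n : ℕ) (hn : 1 ≤ n) (m : ℕ → ℕ) (t : ℕ → ℝ) :
    ∀ i : ℕ, ∀ z : ℝ,
      (1 - z ^ 2) *
          (tauMat ℓ n m t z * deriv (deriv (xGegenC ℓ n m t i)) z
            - 2 * deriv (tauMat ℓ n m t) z * deriv (xGegenC ℓ n m t i) z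
            + deriv (deriv (tauMat ℓ n m t)) z * xGegenC ℓ n m t i z)
        - (2 * ((ℓ : ℝ) + 1/2) + 1) * z * tauMat ℓ n m t z * deriv (xGegenC ℓ n m t i) z
        + (2 * ((ℓ : ℝ) + 1/2) - 1) * z * deriv (tauMat ℓ n m t) z * xGegenC ℓ n m t i z
      = (-(i : ℝ) * (2 * ((ℓ : ℝ) + 1/2) + i)) * tauMat ℓ n m t z * xGegenC ℓ n m t i z := by
  intro i
  have hT (z : ℝ) := tauMat_analyticAt ℓ n m t z
  have hC (z : ℝ) := xGegenC_analyticAt ℓ n m t i z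
  have hfun : AnalyticOnNhd ℝ (fun z => (1 - z ^ 2) *
          (tauMat ℓ n m t z * deriv (deriv (xGegenC ℓ n m t i)) z
            - 2 * deriv (tauMat ℓ n m t) z * deriv (xGegenC ℓ n m t i) z
            + deriv (deriv (tauMat ℓ n m t)) z * xGegenC ℓ n m t i z)
        - (2 * ((ℓ : ℝ) + 1/2) + 1) * z * tauMat ℓ n m t z * deriv (xGegenC ℓ n m t i) z
        + (2 * ((ℓ : ℝ) + 1/2) - 1) * z * deriv (tauMat ℓ n m t) z * xGegenC ℓ n m t i z
      - (-(i : ℝ) * (2 * ((ℓ : ℝ) + 1/2) + i)) * tauMat ℓ n m t z * xGegenC ℓ n m t i z)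
      Set.univ := by
    intro z _
    have h1 := (hT z).deriv
    have h2 := h1.deriv
    have h3 := (hC z).deriv
    have h4 := h3.deriv
    have h5 := hT z
    have h6 := hC z
    fun_prop
  have hprod := AnalyticOnNhd.eq_zero_or_eq_zero_of_mul_eq_zero
    (fun z _ => hT z) hfun (fun z _ => by
      by_cases hz : tauMat ℓ n m t z = 0
      · simp [hz]
      · rw [xGegenC_ode_of_tauMat_ne_zero ℓ n m t i hz, sub_self, mul_zero]) isPreconnected_univ
  rcases hprod with h | h
  · exact absurd (h (-1) (Set.mem_univ _)) (by simp [tauMat_neg_one])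
  · exact fun z => sub_eq_zero.1 (h z (Set.mem_univ z))
end

section
/- Let ℓ ∈ ℕ and α = ℓ + 1/2, n ∈ ℕ, m = (m₁,…,mₙ) ∈ ℕⁿ, and t = (t₁,…,tₙ) ∈ ℝⁿ. With C^{(α)}_i the classical Gegenbauer polynomials, define ρ_{ij}(z) = ∫_{-1}^{z} C^{(α)}_i(u)·C^{(α)}_j(u)·(1-u²)^{ℓ} du, and the matrix objects: R_m(z) the n×n matrix with entries δ_{kℓ'} + t_{ℓ'}·ρ_{m_k m_{ℓ'}}(z), τ_m(z) = det R_m(z), and C_{m;i}(z) = Σ_{j=1}^{n+1} [adj R_{(m,i)}(z)]_{n+1,j}·C^{(α)}_{μ_j}(z) with μ = (m₁,…,mₙ,i) and R_{(m,i)}(z) the (n+1)×(n+1) matrix with entries δ_{kℓ'} + s_{ℓ'}·ρ_{μ_k μ_{ℓ'}}(z), s_{ℓ'} = t_{ℓ'} for ℓ' ≤ n, s_{n+1} = 0. Define recursively: ρ̃_{0;ab} = ρ_{ab}, τ̃₀ = 1, π̃_{0;i} = C^{(α)}_i, and for j = 1,…,n: τ̃_j = (1 + t_j·ρ̃_{j-1;m_j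 m_j})·τ̃_{j-1}, π̃_{j;i} = (1 + t_j·ρ̃_{j-1;m_j m_j})·π̃_{j-1;i} - t_j·ρ̃_{j-1;i m_j}·π̃_{j-1;m_j}, and ρ̃_{j;ab} = ρ̃_{j-1;ab} - t_j·ρ̃_{j-1;a m_j}·ρ̃_{j-1;b m_j}/(1 + t_j·ρ̃_{j-1;m_j m_j}). Then for every z ∈ ℝ such that 1 + t_j·ρ̃_{j-1;m_j m_j}(z) ≠ 0 for all j = 1,…,n, one has τ_m(z) = τ̃_n(z) and C_{m;i}(z) = π̃_{n;i}(z) for every i ∈ ℕ. -/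
/-- The recursively defined `ρ̃_{j;ab}`. -/
noncomputable def rhoRec (ℓ : ℕ) (m : ℕ → ℕ) (t : ℕ → ℝ) : ℕ → ℕ → ℕ → ℝ → ℝ
  | 0 => fun a b z => rhoGegen ℓ a b z
  | j + 1 => fun a b z =>
      rhoRec ℓ m t j a b z -
        t (j + 1) * rhoRec ℓ m t j a (m (j + 1)) z * rhoRec ℓ m t j b (m (j + 1)) z /
          (1 + t (j + 1) * rhoRec ℓ m t j (m (j + 1)) (m (j + 1)) z)

/-- The recursively defined `τ̃_j`. -/
noncomputable def tauRec (ℓ : ℕ) (m : ℕ → ℕ) (t : ℕ → ℝ) : ℕ → ℝ → ℝ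
  | 0 => fun _ => 1
  | j + 1 => fun z =>
      (1 + t (j + 1) * rhoRec ℓ m t j (m (j + 1)) (m (j + 1)) z) * tauRec ℓ m t j z

/-- The recursively defined `π̃_{j;i}`. -/
noncomputable def piRec (ℓ : ℕ) (m : ℕ → ℕ) (t : ℕ → ℝ) : ℕ → ℕ → ℝ → ℝ
  | 0 => fun i z => gegenC ((ℓ : ℝ) + 1/2) i z
  | j + 1 => fun i z =>
      (1 + t (j + 1) * rhoRec ℓ m t j (m (j + 1)) (m (j + 1)) z) * piRec ℓ m t j i z -
        t (j + 1) * rhoRec ℓ m t j i (m (j + 1)) z * piRec ℓ m t j (m (j + 1)) z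

/-- One step of Gaussian elimination with pivot in the upper left corner. -/
theorem det_eq_pivot_mul_det_schur {n : ℕ} (M : Matrix (Fin (n + 1)) (Fin (n + 1)) ℝ)
    (h : M 0 0 ≠ 0) :
    M.det = M 0 0 * (Matrix.of fun i j : Fin n =>
      M i.succ j.succ - M i.succ 0 * M 0 j.succ / M 0 0).det := by
  let N : Matrix (Fin (n + 1)) (Fin (n + 1)) ℝ := Matrix.of
    (Fin.cons (M 0) fun i j => M i.succ j - M i.succ 0 / M 0 0 * M 0 j)
  have hMN : M.det = N.det := by
    refine Matrix.det_eq_of_forall_row_eq_smul_add_const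
      (Fin.cons 0 fun i => M i.succ 0 / M 0 0) 0 rfl fun i j => ?_
    refine Fin.cases ?_ (fun i => ?_) i <;> simp [N]
  rw [hMN, Matrix.det_succ_column_zero, Fin.sum_univ_succ, Finset.sum_eq_zero]
  · have hsub : N.submatrix (Fin.succAbove 0) Fin.succ = Matrix.of fun i j : Fin n =>
        M i.succ j.succ - M i.succ 0 * M 0 j.succ / M 0 0 := by
      ext i j
      simp [N]
      ring
    rw [hsub]
    simp [N]
  · intro i _
    have : N i.succ 0 = 0 := by
      simp [N, h]
    rw [this]
    ring

theorem rhoRec_symm (ℓ : ℕ) (m : ℕ → ℕ) (t : ℕ → ℝ) (j a b : ℕ) (z : ℝ) :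
    rhoRec ℓ m t j a b z = rhoRec ℓ m t j b a z := by
  induction j generalizing a b with
  | zero => simp only [rhoRec, rhoGegen, mul_comm (gegenC _ a _)]
  | succ j ih =>
    simp only [rhoRec, ih a b]
    ring

/-- The matrix `R` for the last `n` steps of the chain, built from the data after `s` steps. -/
noncomputable def chainMat (ℓ : ℕ) (m : ℕ → ℕ) (t : ℕ → ℝ) (z : ℝ) (s n : ℕ) :
    Matrix (Fin n) (Fin n) ℝ :=
  Matrix.of fun k l => (if k = l then (1 : ℝ) else 0) +
    t (s + l + 1) * rhoRec ℓ m t s (m (s + k + 1)) (m (s + l + 1)) z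

/-- The matrix `chainMat` bordered by a row for the index `i` and a column of values `π̃_s`. -/
noncomputable def chainBordered (ℓ : ℕ) (m : ℕ → ℕ) (t : ℕ → ℝ) (z : ℝ) (i s n : ℕ) :
    Matrix (Fin (n + 1)) (Fin (n + 1)) ℝ :=
  Matrix.of fun k l =>
    if (l : ℕ) < n then (if k = l then (1 : ℝ) else 0) + t (s + l + 1) *
      rhoRec ℓ m t s (if (k : ℕ) < n then m (s + k + 1) else i) (m (s + l + 1)) z
    else piRec ℓ m t s (if (k : ℕ) < n then m (s + k + 1) else i) z

theorem det_chainMat_succ (ℓ : ℕ) (m : ℕ → ℕ) (t : ℕ → ℝ) (z : ℝ) (s n : ℕ)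
    (h : 1 + t (s + 1) * rhoRec ℓ m t s (m (s + 1)) (m (s + 1)) z ≠ 0) :
    (chainMat ℓ m t z s (n + 1)).det =
      (1 + t (s + 1) * rhoRec ℓ m t s (m (s + 1)) (m (s + 1)) z) *
        (chainMat ℓ m t z (s + 1) n).det := by
  have h00 : chainMat ℓ m t z s (n + 1) 0 0 =
      1 + t (s + 1) * rhoRec ℓ m t s (m (s + 1)) (m (s + 1)) z := by simp [chainMat]
  rw [det_eq_pivot_mul_det_schur _ (h00 ▸ h), h00]
  congr 2
  ext k l
  have e (x : ℕ) : s + (x + 1) + 1 = s + 1 + x + 1 := by omega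
  simp only [chainMat, Matrix.of_apply, Fin.succ_inj, Fin.val_succ, e, rhoRec, Fin.succ_ne_zero,
    (Fin.succ_ne_zero _).symm, if_false, Fin.val_zero, add_zero, zero_add,
    rhoRec_symm ℓ m t s (m (s + 1)) (m (s + 1 + l + 1))]
  ring

theorem det_chainBordered_succ (ℓ : ℕ) (m : ℕ → ℕ) (t : ℕ → ℝ) (z : ℝ) (i s n : ℕ)
    (h : 1 + t (s + 1) * rhoRec ℓ m t s (m (s + 1)) (m (s + 1)) z ≠ 0) :
    (chainBordered ℓ m t z i s (n + 1)).det = (chainBordered ℓ m t z i (s + 1) n).det := by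
  set p := 1 + t (s + 1) * rhoRec ℓ m t s (m (s + 1)) (m (s + 1)) z with hp
  have h00 : chainBordered ℓ m t z i s (n + 1) 0 0 = p := by simp [chainBordered, p]
  have hprod : ∏ l : Fin (n + 1), (if (l : ℕ) < n then (1 : ℝ) else p⁻¹) = p⁻¹ := by
    simp [Fin.prod_univ_castSucc]
  rw [det_eq_pivot_mul_det_schur _ (h00 ▸ h), h00]
  have hcol : (Matrix.of fun k l : Fin (n + 1) =>
      chainBordered ℓ m t z i s (n + 1) k.succ l.succ -
        chainBordered ℓ m t z i s (n + 1) k.succ 0 *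
          chainBordered ℓ m t z i s (n + 1) 0 l.succ / p) =
      Matrix.of fun k l : Fin (n + 1) => (if (l : ℕ) < n then (1 : ℝ) else p⁻¹) *
        chainBordered ℓ m t z i (s + 1) n k l := by
    ext k l
    have e (x : ℕ) : s + (x + 1) + 1 = s + 1 + x + 1 := by omega
    simp only [chainBordered, Matrix.of_apply, Fin.succ_inj, Fin.val_succ, e, rhoRec, piRec,
      Fin.succ_ne_zero, (Fin.succ_ne_zero _).symm, if_false, Fin.val_zero, add_zero, zero_add,
      add_lt_add_iff_right, Nat.succ_pos, if_true, ← hp,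
      rhoRec_symm ℓ m t s (m (s + 1)) (m (s + 1 + l + 1))]
    split_ifs <;> field_simp <;> ring
  rw [hcol, Matrix.det_mul_row, hprod, mul_inv_cancel_left₀ h]

theorem det_chainMat_mul_tauRec (ℓ : ℕ) (m : ℕ → ℕ) (t : ℕ → ℝ) (z : ℝ) (s n : ℕ)
    (h : ∀ j, s ≤ j → j < s + n →
      1 + t (j + 1) * rhoRec ℓ m t j (m (j + 1)) (m (j + 1)) z ≠ 0) :
    (chainMat ℓ m t z s n).det * tauRec ℓ m t s z = tauRec ℓ m t (s + n) z := by
  induction n generalizing s with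
  | zero => simp
  | succ n ih =>
    rw [det_chainMat_succ _ _ _ _ _ _ (h s le_rfl (by omega)), ← add_assoc, add_right_comm,
      ← ih (s + 1) fun j h₁ h₂ => h j (by omega) (by omega)]
    simp only [tauRec]
    ring

theorem det_chainBordered (ℓ : ℕ) (m : ℕ → ℕ) (t : ℕ → ℝ) (z : ℝ) (i s n : ℕ)
    (h : ∀ j, s ≤ j → j < s + n →
      1 + t (j + 1) * rhoRec ℓ m t j (m (j + 1)) (m (j + 1)) z ≠ 0) :
    (chainBordered ℓ m t z i s n).det = piRec ℓ m t (s + n) i z := by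
  induction n generalizing s with
  | zero => simp [chainBordered]
  | succ n ih =>
    rw [det_chainBordered_succ _ _ _ _ _ _ _ (h s le_rfl (by omega)), ← add_assoc,
      add_right_comm, ← ih (s + 1) fun j h₁ h₂ => h j (by omega) (by omega)]

theorem tauMat_eq_det_chainMat (ℓ n : ℕ) (m : ℕ → ℕ) (t : ℕ → ℝ) (z : ℝ) :
    tauMat ℓ n m t z = (chainMat ℓ m t z 0 n).det := by
  simp [tauMat, rMat, chainMat, rhoRec]

theorem xGegenC_eq_det_chainBordered (ℓ n : ℕ) (m : ℕ → ℕ) (t : ℕ → ℝ) (i : ℕ) (z : ℝ) :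
    xGegenC ℓ n m t i z = (chainBordered ℓ m t z i 0 n).det := by
  have hcramer := Matrix.cramer_eq_adjugate_mulVec
    (rMat ℓ (n + 1) (fun a => if a ≤ n then m a else i) (fun a => if a ≤ n then t a else 0) z)
    fun j => gegenC ((ℓ : ℝ) + 1/2) (if j.1 + 1 ≤ n then m (j.1 + 1) else i) z
  refine (congrFun hcramer (Fin.last n)).symm.trans ?_
  rw [Matrix.cramer_apply]
  congr 1
  ext k l
  refine Fin.lastCases ?_ (fun l => ?_) l
  · simp [chainBordered, piRec]
  · simp [chainBordered, rMat, rhoRec,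
      (Fin.castSucc_lt_last l).ne]

/-- equivalence of the matrix-based and the recursive (confluent
Darboux chain) definitions of the exceptional Gegenbauer τ-function and
polynomials of the second kind. -/
theorem statement19 (ℓ : ℕ) (n : ℕ) (hn : 1 ≤ n) (m : ℕ → ℕ) (t : ℕ → ℝ) :
    ∀ z : ℝ,
      (∀ j ∈ Finset.Icc 1 n, 1 + t j * rhoRec ℓ m t (j - 1) (m j) (m j) z ≠ 0) →
      tauMat ℓ n m t z = tauRec ℓ m t n z ∧
      ∀ i : ℕ, xGegenC ℓ n m t i z = piRec ℓ m t n i z := by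
  intro z hz
  have h : ∀ j, 0 ≤ j → j < 0 + n →
      1 + t (j + 1) * rhoRec ℓ m t j (m (j + 1)) (m (j + 1)) z ≠ 0 := fun j _ hj => by
    simpa using hz (j + 1) (Finset.mem_Icc.2 ⟨by omega, by omega⟩)
  refine ⟨?_, fun i => ?_⟩
  · simpa [tauMat_eq_det_chainMat, tauRec] using det_chainMat_mul_tauRec ℓ m t z 0 n h
  · simpa [xGegenC_eq_det_chainBordered] using det_chainBordered ℓ m t z i 0 n h
end
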